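/- Let a ∈ (0,1) be irrational and let δ ∈ (0,1). Then there exists a constant C > 0 depending only on a and δ such that for all sufficiently large n, writing d = 2^n and k = ⌊d^δ⌋, one has d^{a+δ(1−a) − C/√(log₂ d)} ≤ log₂ a_{n,k} ≤ d^{a+δ(1−a) + C/√(log₂ d)}. (This is Theorem 1.5, part 2.) -/

import Mathlib

/-- `A_a = {⌊n/a⌋ : n ∈ ℕ, n ≥ 1}`, the set of floors of positive multiples of `1/a`. -/
def Aset (a : ℝ) : Set ℕ := {m | ∃ n : ℕ, 1 ≤ n ∧ m = ⌊(n : ℝ) / a⌋₊}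

/-- The generating function `F_n(t) = ∑_k a_{n,k} t^k` of the face numbers of the basic
Hanner-type polytopes: `F_0 = t + 2`, and `F_{n+1} = F_n ^ 2` for `n ∈ A_a` (product
step), `F_{n+1} = t·F_n ^ 2 + 2·F_n` for `n ∉ A_a` (convex hull step).
The coefficient `a_{n,k}` is `(F a n).coeff k`. -/
noncomputable def F (a : ℝ) : ℕ → Polynomial ℤ
  | 0 => Polynomial.X + 2
  | n + 1 =>
      haveI := Classical.propDecidable (n ∈ Aset a)
      if n ∈ Aset a then F a n ^ 2
      else Polynomial.X * F a n ^ 2 + 2 * F a n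

/-!
Let `c` be the number of product steps among the first `m ≥ 1` steps, so that `c = ⌈a m⌉ - 1`, and
let `2 ^ r ≤ k ≤ 2 ^ (r + 1)`. Up to a factor linear in `m`, `log₂ a_{m+r,k}` is `2 ^ (c + r)`.

Lower bound: a lower bound for the coefficients of degree at most `2` is squared by each product
step and kept by a hull step, so after `m` steps these coefficients are at least `2 ^ 2 ^ c`. The
next `r` steps, of either kind, each square the bound and double the window of degrees where it
holds, which then contains `k`.

Upper bound: `a_{m+r,k} ≤ F_{m+r}(t) / t ^ k` for `t > 0`, and we take `t = 2 ^ (-x)` with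
`x = 2 (m + 1) 2 ^ c`. As long as `t F_j(t) ≤ 1`, a hull step multiplies the value at `t` only by a
bounded factor, which gives `F_m(t) ≤ 2 ^ x`; each of the last `r` steps at most squares `2 F_j(t)`.

For `m + r = n` and `r` within `1` of `n δ`, the exponent `c + r` is `n (a + δ (1 - a))` up to a
bounded error.
-/

open Polynomial

section Coefficients

variable {R : Type*} [Semiring R]

/-- The effect `p ↦ t p² + 2 p` of a convex hull step on the generating function of the face
numbers. -/
noncomputable def hullStep (p : R[X]) : R[X] := X * p ^ 2 + 2 * p

lemma coeff_hullStep_zero (p : R[X]) : (hullStep p).coeff 0 = 2 * p.coeff 0 := by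
  simp [hullStep, coeff_ofNat_mul]

lemma coeff_hullStep_succ (p : R[X]) (k : ℕ) :
    (hullStep p).coeff (k + 1) = (p ^ 2).coeff k + 2 * p.coeff (k + 1) := by
  simp [hullStep, coeff_X_mul, coeff_ofNat_mul]

variable [PartialOrder R] [IsOrderedRing R] {p q : R[X]} {b : R}

lemma coeff_mul_nonneg (hp : ∀ k, 0 ≤ p.coeff k) (hq : ∀ k, 0 ≤ q.coeff k) (k : ℕ) :
    0 ≤ (p * q).coeff k := by
  rw [coeff_mul]
  exact Finset.sum_nonneg fun x _ => mul_nonneg (hp x.1) (hq x.2)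

lemma coeff_mul_coeff_le_coeff_mul (hp : ∀ k, 0 ≤ p.coeff k) (hq : ∀ k, 0 ≤ q.coeff k)
    (i j : ℕ) : p.coeff i * q.coeff j ≤ (p * q).coeff (i + j) := by
  rw [coeff_mul]
  exact Finset.single_le_sum (f := fun x : ℕ × ℕ => p.coeff x.1 * q.coeff x.2)
    (fun x _ => mul_nonneg (hp x.1) (hq x.2)) (a := (i, j)) (by simp)

lemma coeff_sq_nonneg (hp : ∀ k, 0 ≤ p.coeff k) (k : ℕ) : 0 ≤ (p ^ 2).coeff k :=
  sq p ▸ coeff_mul_nonneg hp hp k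

lemma sq_le_coeff_sq_add (hb : 0 ≤ b) (hp : ∀ k, 0 ≤ p.coeff k) {i j : ℕ}
    (hi : b ≤ p.coeff i) (hj : b ≤ p.coeff j) : b ^ 2 ≤ (p ^ 2).coeff (i + j) := by
  rw [sq, sq]
  exact (mul_le_mul hi hj hb (hp i)).trans (coeff_mul_coeff_le_coeff_mul hp hp i j)

lemma coeff_le_coeff_hullStep (hp : ∀ k, 0 ≤ p.coeff k) (k : ℕ) :
    p.coeff k ≤ (hullStep p).coeff k := by
  have le_two_mul : p.coeff k ≤ 2 * p.coeff k := by
    rw [two_mul]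
    exact le_add_of_nonneg_left (hp k)
  cases k with
  | zero => rwa [coeff_hullStep_zero]
  | succ k =>
    rw [coeff_hullStep_succ]
    exact le_add_of_nonneg_of_le (coeff_sq_nonneg hp k) le_two_mul

lemma coeff_sq_le_coeff_hullStep_succ (hp : ∀ k, 0 ≤ p.coeff k) (k : ℕ) :
    (p ^ 2).coeff k ≤ (hullStep p).coeff (k + 1) := by
  rw [coeff_hullStep_succ, two_mul]
  exact le_add_of_nonneg_right (add_nonneg (hp _) (hp _))

end Coefficients

lemma coeff_mul_pow_le_eval {R : Type*} [CommSemiring R] [PartialOrder R] [IsOrderedRing R]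
    {p : R[X]} (hp : ∀ k, 0 ≤ p.coeff k) {t : R} (ht : 0 ≤ t) (k : ℕ) :
    p.coeff k * t ^ k ≤ p.eval t := by
  rw [eval_eq_sum_range' (n := max (k + 1) (p.natDegree + 1)) (by omega)]
  exact Finset.single_le_sum (f := fun i => p.coeff i * t ^ i)
    (fun i _ => mul_nonneg (hp i) (pow_nonneg ht i)) (a := k) (by simp)

lemma aeval_hullStep {R A : Type*} [CommSemiring R] [Semiring A] [Algebra R A]
    (p : R[X]) (t : A) : aeval t (hullStep p) = t * aeval t p ^ 2 + 2 * aeval t p := by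
  simp [hullStep, map_ofNat]

section ProductSteps

open scoped Classical in
/-- The number of product steps among the first `n` steps of the construction. -/
noncomputable def productCount (a : ℝ) (n : ℕ) : ℕ := Nat.count (· ∈ Aset a) n

variable {a : ℝ} {n : ℕ}

lemma productCount_zero (a : ℝ) : productCount a 0 = 0 := by
  simp [productCount]

lemma productCount_succ_of_mem (h : n ∈ Aset a) :
    productCount a (n + 1) = productCount a n + 1 := by
  simp [productCount, Nat.count_succ, h]

lemma productCount_succ_of_notMem (h : n ∉ Aset a) :
    productCount a (n + 1) = productCount a n := by
  simp [productCount, Nat.count_succ, h]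

lemma productCount_mono (a : ℝ) : Monotone (productCount a) := by
  classical
  exact Nat.count_monotone (· ∈ Aset a)

lemma mem_Aset_iff (ha : 0 < a) :
    n ∈ Aset a ↔ ∃ i : ℕ, 1 ≤ i ∧ ⌈a * n⌉₊ ≤ i ∧ i < ⌈a * (n + 1 : ℕ)⌉₊ := by
  refine exists_congr fun i => and_congr_right fun _ => ?_
  rw [eq_comm, Nat.floor_eq_iff (by positivity), le_div_iff₀ ha, div_lt_iff₀ ha, Nat.ceil_le,
    Nat.lt_ceil, mul_comm a, mul_comm a, Nat.cast_succ]

lemma zero_notMem_Aset (ha : a ∈ Set.Ioc (0 : ℝ) 1) : 0 ∉ Aset a := by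
  rw [mem_Aset_iff ha.1]
  rintro ⟨i, one_le, -, lt⟩
  have : ⌈a * (0 + 1 : ℕ)⌉₊ ≤ 1 := by simpa using ha.2
  omega

lemma mem_Aset_iff_ceil_lt (ha : 0 < a) (hn : n ≠ 0) :
    n ∈ Aset a ↔ ⌈a * n⌉₊ < ⌈a * (n + 1 : ℕ)⌉₊ := by
  have ceil_pos : 1 ≤ ⌈a * n⌉₊ := Nat.ceil_pos.2 (by positivity)
  rw [mem_Aset_iff ha]
  exact ⟨fun ⟨_, _, h, h'⟩ => h.trans_lt h', fun h => ⟨_, ceil_pos, le_rfl, h⟩⟩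

theorem productCount_add_one (ha : a ∈ Set.Ioc (0 : ℝ) 1) (hn : n ≠ 0) :
    productCount a n + 1 = ⌈a * n⌉₊ := by
  induction n, Nat.one_le_iff_ne_zero.2 hn using Nat.le_induction with
  | base =>
    have : ⌈a⌉₊ = 1 := (Nat.ceil_eq_iff one_ne_zero).2 (by simpa using ha)
    simp [productCount_succ_of_notMem (zero_notMem_Aset ha), productCount_zero, this]
  | succ n one_le ih =>
    have n_ne : n ≠ 0 := Nat.one_le_iff_ne_zero.1 one_le
    have ceil_mono : ⌈a * n⌉₊ ≤ ⌈a * (n + 1 : ℕ)⌉₊ :=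
      Nat.ceil_mono (mul_le_mul_of_nonneg_left (by simp) ha.1.le)
    have ceil_succ_le : ⌈a * (n + 1 : ℕ)⌉₊ ≤ ⌈a * n⌉₊ + 1 := by
      rw [← Nat.ceil_add_one (by have := ha.1; positivity)]
      refine Nat.ceil_mono ?_
      push_cast
      linarith [ha.2]
    by_cases h : n ∈ Aset a
    · rw [productCount_succ_of_mem h, ih n_ne]
      exact le_antisymm ((mem_Aset_iff_ceil_lt ha.1 n_ne).1 h) ceil_succ_le
    · rw [productCount_succ_of_notMem h, ih n_ne]
      exact le_antisymm ceil_mono (not_lt.1 (mt (mem_Aset_iff_ceil_lt ha.1 n_ne).2 h))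

lemma le_productCount_add_one (ha : a ∈ Set.Ioc (0 : ℝ) 1) (hn : n ≠ 0) :
    a * n ≤ productCount a n + 1 := by
  exact_mod_cast productCount_add_one ha hn ▸ Nat.le_ceil (a * n)

lemma productCount_le (ha : a ∈ Set.Ioc (0 : ℝ) 1) (n : ℕ) : productCount a n ≤ a * n := by
  rcases eq_or_ne n 0 with rfl | hn
  · simp [productCount_zero]
  · exact (Nat.lt_ceil.1 (productCount_add_one ha hn ▸ Nat.lt_succ_self _)).le

end ProductSteps

section FacePolynomials

variable {a : ℝ} {n : ℕ}

lemma F_succ_of_mem (h : n ∈ Aset a) : F a (n + 1) = F a n ^ 2 := by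
  simp [F, h]

lemma F_succ_of_notMem (h : n ∉ Aset a) : F a (n + 1) = hullStep (F a n) := by
  simp [F, h, hullStep]

lemma coeff_F_nonneg (a : ℝ) (n k : ℕ) : 0 ≤ (F a n).coeff k := by
  induction n generalizing k with
  | zero => rcases k with _ | _ | k <;> simp [F, coeff_X, coeff_ofNat_succ]
  | succ n ih =>
    by_cases h : n ∈ Aset a
    · rw [F_succ_of_mem h]
      exact coeff_sq_nonneg ih k
    · rw [F_succ_of_notMem h]
      exact (ih k).trans (coeff_le_coeff_hullStep ih k)

lemma two_le_coeff_F_one (h : 0 ∉ Aset a) {j : ℕ} (hj : j ≤ 2) : 2 ≤ (F a 1).coeff j := by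
  have F_one : F a 1 = X ^ 3 + C 4 * X ^ 2 + C 6 * X + C 4 := by
    rw [F_succ_of_notMem h]
    simp only [F, hullStep, map_ofNat]
    ring
  rw [F_one]
  interval_cases j <;> simp [coeff_X, coeff_X_pow]

lemma two_pow_two_pow_le_coeff_F (h0 : 0 ∉ Aset a) (hn : n ≠ 0) {j : ℕ} (hj : j ≤ 2) :
    2 ^ 2 ^ productCount a n ≤ (F a n).coeff j := by
  induction n, Nat.one_le_iff_ne_zero.2 hn using Nat.le_induction generalizing j with
  | base =>
    simpa [productCount_succ_of_notMem h0, productCount_zero] using two_le_coeff_F_one h0 hj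
  | succ n one_le ih =>
    have n_ne : n ≠ 0 := Nat.one_le_iff_ne_zero.1 one_le
    by_cases h : n ∈ Aset a
    · rw [F_succ_of_mem h, productCount_succ_of_mem h, pow_succ 2 (productCount a n), pow_mul,
        ← zero_add j]
      exact sq_le_coeff_sq_add (by positivity) (coeff_F_nonneg a n) (ih n_ne zero_le_two)
        (ih n_ne hj)
    · rw [F_succ_of_notMem h, productCount_succ_of_notMem h]
      exact (ih n_ne hj).trans (coeff_le_coeff_hullStep (coeff_F_nonneg a n) j)

lemma sq_le_coeff_F_succ {b : ℤ} (hb : 0 ≤ b) {l u k : ℕ}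
    (h : ∀ j, l ≤ j → j ≤ u → b ≤ (F a n).coeff j) (hl : 2 * l < k) (hu : k ≤ 2 * u) :
    b ^ 2 ≤ (F a (n + 1)).coeff k := by
  have sq_le : ∀ j, 2 * l ≤ j → j ≤ 2 * u → b ^ 2 ≤ (F a n ^ 2).coeff j := by
    intro j hj hj'
    rw [show j = j / 2 + (j - j / 2) by omega]
    exact sq_le_coeff_sq_add hb (coeff_F_nonneg a n) (h _ (by omega) (by omega))
      (h _ (by omega) (by omega))
  by_cases hn : n ∈ Aset a
  · rw [F_succ_of_mem hn]
    exact sq_le k hl.le hu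
  · obtain ⟨i, rfl⟩ := Nat.exists_eq_succ_of_ne_zero (show k ≠ 0 by omega)
    rw [F_succ_of_notMem hn]
    exact (sq_le i (by omega) (by omega)).trans
      (coeff_sq_le_coeff_hullStep_succ (coeff_F_nonneg a n) i)

lemma pow_two_pow_le_coeff_F_add {b : ℤ} (hb : 0 ≤ b) {l u : ℕ}
    (h : ∀ j, l ≤ j → j ≤ u → b ≤ (F a n).coeff j) (r : ℕ) {k : ℕ}
    (hl : 2 ^ r * (l + 1) ≤ k + 1) (hu : k ≤ 2 ^ r * u) :
    b ^ 2 ^ r ≤ (F a (n + r)).coeff k := by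
  induction r generalizing k with
  | zero => simpa using h k (by omega) (by omega)
  | succ r ih =>
    rw [pow_succ, mul_right_comm] at hl hu
    rw [pow_succ, pow_mul, ← add_assoc]
    refine sq_le_coeff_F_succ (pow_nonneg hb _) (l := 2 ^ r * (l + 1) - 1) (u := 2 ^ r * u)
      (fun j hj hj' => ih (by omega) hj') ?_ (by omega)
    have : 0 < 2 ^ r * (l + 1) := by positivity
    omega

theorem two_pow_two_pow_le_coeff_F_add (h0 : 0 ∉ Aset a) (hn : n ≠ 0) {r k : ℕ}
    (hk : 2 ^ r ≤ k) (hk' : k ≤ 2 ^ (r + 1)) :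
    2 ^ 2 ^ (productCount a n + r) ≤ (F a (n + r)).coeff k := by
  rw [pow_add 2 (productCount a n), pow_mul]
  exact pow_two_pow_le_coeff_F_add (by positivity) (l := 0) (u := 2)
    (fun j _ hj => two_pow_two_pow_le_coeff_F h0 hn hj) r (by omega) (by omega)

variable {t : ℝ}

lemma two_le_aeval_F (a : ℝ) (ht : 0 ≤ t) (n : ℕ) : 2 ≤ aeval t (F a n) := by
  induction n with
  | zero => simpa [F, map_ofNat] using ht
  | succ n ih =>
    by_cases h : n ∈ Aset a
    · rw [F_succ_of_mem h, map_pow]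
      nlinarith
    · rw [F_succ_of_notMem h, aeval_hullStep]
      have : 0 ≤ t * aeval t (F a n) ^ 2 := by positivity
      linarith

lemma aeval_F_le_two_pow (ht : 0 ≤ t) (h : t * 2 ^ (2 * (n + 1) * 2 ^ productCount a n) ≤ 1) :
    aeval t (F a n) ≤ 2 ^ (2 * (n + 1) * 2 ^ productCount a n) := by
  induction n with
  | zero =>
    norm_num [F, productCount_zero, map_ofNat] at h ⊢
    linarith
  | succ n ih =>
    have exponent_mono : 2 * (n + 1) * 2 ^ productCount a n ≤
        2 * (n + 1 + 1) * 2 ^ productCount a (n + 1) := by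
      gcongr
      · omega
      · exact one_le_two
      · exact productCount_mono a n.le_succ
    have ht' : t * 2 ^ (2 * (n + 1) * 2 ^ productCount a n) ≤ 1 :=
      (mul_le_mul_of_nonneg_left (pow_le_pow_right₀ one_le_two exponent_mono) ht).trans h
    have ih := ih ht'
    have two_le := two_le_aeval_F a ht n
    by_cases hn : n ∈ Aset a
    · rw [F_succ_of_mem hn, productCount_succ_of_mem hn, map_pow]
      calc aeval t (F a n) ^ 2
          ≤ (2 ^ (2 * (n + 1) * 2 ^ productCount a n)) ^ 2 := by gcongr
        _ = 2 ^ (2 * (n + 1) * 2 ^ (productCount a n + 1)) := by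
          rw [← pow_mul, pow_succ, mul_assoc]
        _ ≤ 2 ^ (2 * (n + 1 + 1) * 2 ^ (productCount a n + 1)) := by
          gcongr
          · exact one_le_two
          · omega
    · rw [F_succ_of_notMem hn, productCount_succ_of_notMem hn, aeval_hullStep]
      have mul_le_one : t * aeval t (F a n) ≤ 1 := le_trans (by gcongr) ht'
      calc t * aeval t (F a n) ^ 2 + 2 * aeval t (F a n)
          ≤ 2 ^ 2 * aeval t (F a n) := by nlinarith
        _ ≤ 2 ^ 2 * 2 ^ (2 * (n + 1) * 2 ^ productCount a n) := by gcongr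
        _ = 2 ^ (2 + 2 * (n + 1) * 2 ^ productCount a n) := by rw [pow_add]
        _ ≤ 2 ^ (2 * (n + 1 + 1) * 2 ^ productCount a n) := by
          have : 1 ≤ 2 ^ productCount a n := Nat.one_le_two_pow
          gcongr
          · norm_num
          · linarith

lemma two_mul_aeval_F_add_le (a : ℝ) (ht : 0 ≤ t) (ht1 : t ≤ 1) (n r : ℕ) :
    2 * aeval t (F a (n + r)) ≤ (2 * aeval t (F a n)) ^ 2 ^ r := by
  induction r with
  | zero => simp
  | succ r ih =>
    have two_le := two_le_aeval_F a ht (n + r)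
    rw [← add_assoc, pow_succ 2 r, pow_mul]
    refine le_trans ?_ (pow_le_pow_left₀ (by linarith) ih 2)
    by_cases h : n + r ∈ Aset a
    · rw [F_succ_of_mem h, map_pow]
      nlinarith
    · rw [F_succ_of_notMem h, aeval_hullStep]
      nlinarith [mul_le_mul_of_nonneg_right ht1 (sq_nonneg (aeval t (F a (n + r))))]

lemma coeff_F_mul_pow_le_aeval (a : ℝ) (n : ℕ) (ht : 0 ≤ t) (k : ℕ) :
    (F a n).coeff k * t ^ k ≤ aeval t (F a n) := by
  have := coeff_mul_pow_le_eval (p := (F a n).map (algebraMap ℤ ℝ))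
    (fun i => by simpa using coeff_F_nonneg a n i) ht k
  simpa only [eval_map_algebraMap, coeff_map, eq_intCast] using this

lemma coeff_F_add_le_two_pow_add {x : ℕ} (hx : x = 2 * (n + 1) * 2 ^ productCount a n)
    (r k : ℕ) : ((F a (n + r)).coeff k : ℝ) ≤ 2 ^ ((x + 1) * 2 ^ r + x * k) := by
  have ht : (0 : ℝ) ≤ (2 ^ x)⁻¹ := by positivity
  have ht1 : ((2 : ℝ) ^ x)⁻¹ ≤ 1 := inv_le_one_of_one_le₀ (one_le_pow₀ one_le_two)
  have aeval_le : aeval ((2 : ℝ) ^ x)⁻¹ (F a n) ≤ 2 ^ x := by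
    rw [hx] at ht ⊢
    exact aeval_F_le_two_pow ht (inv_mul_cancel₀ (by positivity)).le
  have two_le := two_le_aeval_F a ht
  calc ((F a (n + r)).coeff k : ℝ)
      ≤ aeval ((2 : ℝ) ^ x)⁻¹ (F a (n + r)) * (2 ^ x) ^ k := by
        rw [← div_le_iff₀ (by positivity), div_eq_mul_inv, ← inv_pow]
        exact coeff_F_mul_pow_le_aeval a (n + r) ht k
    _ ≤ (2 * aeval ((2 : ℝ) ^ x)⁻¹ (F a n)) ^ 2 ^ r * (2 ^ x) ^ k := by
        gcongr
        linarith [two_mul_aeval_F_add_le a ht ht1 n r, two_le (n + r)]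
    _ ≤ (2 * 2 ^ x) ^ 2 ^ r * (2 ^ x) ^ k := by
        gcongr
        linarith [two_le n]
    _ = 2 ^ ((x + 1) * 2 ^ r + x * k) := by ring

theorem coeff_F_add_le_two_pow (a : ℝ) (n : ℕ) {r k : ℕ} (hk : k ≤ 2 ^ (r + 1)) :
    (F a (n + r)).coeff k ≤ 2 ^ (8 * (n + 1) * 2 ^ (productCount a n + r)) := by
  obtain ⟨x, hx⟩ : ∃ x, x = 2 * (n + 1) * 2 ^ productCount a n := ⟨_, rfl⟩
  have x_pos : 1 ≤ x := hx ▸ Nat.one_le_iff_ne_zero.2 (by positivity)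
  have exponent_le :
      (x + 1) * 2 ^ r + x * k ≤ 8 * (n + 1) * 2 ^ (productCount a n + r) := calc
    (x + 1) * 2 ^ r + x * k ≤ (x + x) * 2 ^ r + x * 2 ^ (r + 1) := by gcongr
    _ = 8 * (n + 1) * 2 ^ (productCount a n + r) := by rw [hx]; ring
  have := (coeff_F_add_le_two_pow_add hx r k).trans (pow_le_pow_right₀ one_le_two exponent_le)
  exact_mod_cast this

theorem two_pow_le_logb_coeff_F_add (h0 : 0 ∉ Aset a) (hn : n ≠ 0) {r k : ℕ}
    (hk : 2 ^ r ≤ k) (hk' : k ≤ 2 ^ (r + 1)) :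
    (2 : ℝ) ^ (productCount a n + r) ≤ Real.logb 2 ((F a (n + r)).coeff k) := by
  have coeff_ge : (2 : ℝ) ^ 2 ^ (productCount a n + r) ≤ (F a (n + r)).coeff k := by
    exact_mod_cast two_pow_two_pow_le_coeff_F_add h0 hn hk hk'
  rw [Real.le_logb_iff_rpow_le one_lt_two (lt_of_lt_of_le (by positivity) coeff_ge)]
  exact_mod_cast coeff_ge

theorem logb_coeff_F_add_le (a : ℝ) (n : ℕ) {r k : ℕ} (hk : k ≤ 2 ^ (r + 1)) :
    Real.logb 2 ((F a (n + r)).coeff k) ≤ 8 * (n + 1) * 2 ^ (productCount a n + r) := by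
  rcases (coeff_F_nonneg a (n + r) k).eq_or_lt with coeff_eq | coeff_pos
  · rw [← coeff_eq, Int.cast_zero, Real.logb_zero]
    positivity
  · rw [Real.logb_le_iff_le_rpow one_lt_two (by exact_mod_cast coeff_pos)]
    exact_mod_cast coeff_F_add_le_two_pow a n hk

end FacePolynomials

section Asymptotics

lemma two_pow_rpow (n : ℕ) (x : ℝ) : ((2 : ℝ) ^ n) ^ x = 2 ^ (n * x) :=
  (Real.rpow_natCast_mul zero_le_two n x).symm

lemma two_pow_le_floor_two_rpow {r : ℕ} {x : ℝ} (h : r ≤ x) : 2 ^ r ≤ ⌊(2 : ℝ) ^ x⌋₊ := by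
  refine Nat.le_floor ?_
  rw [Nat.cast_pow, Nat.cast_ofNat, ← Real.rpow_natCast]
  exact Real.rpow_le_rpow_of_exponent_le one_le_two h

lemma floor_two_rpow_le_two_pow {r : ℕ} {x : ℝ} (h : x ≤ r) : ⌊(2 : ℝ) ^ x⌋₊ ≤ 2 ^ r := by
  refine Nat.floor_le_of_le ?_
  rw [Nat.cast_pow, Nat.cast_ofNat, ← Real.rpow_natCast]
  exact Real.rpow_le_rpow_of_exponent_le one_le_two h

lemma natCast_le_two_rpow_two_mul_sqrt {n : ℕ} (hn : n ≠ 0) : (n : ℝ) ≤ 2 ^ (2 * √n) := by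
  have one_le_sqrt : 1 ≤ √(n : ℝ) :=
    Real.one_le_sqrt.2 (by exact_mod_cast Nat.one_le_iff_ne_zero.2 hn)
  have bernoulli := one_add_mul_self_le_rpow_one_add (s := 1) (by norm_num) one_le_sqrt
  have sqrt_le : √(n : ℝ) ≤ 2 ^ √(n : ℝ) := by
    rw [one_add_one_eq_two, mul_one] at bernoulli
    linarith
  rw [two_mul, Real.rpow_add two_pos]
  exact (Real.mul_self_sqrt n.cast_nonneg).symm.trans_le (by gcongr)

variable {a δ : ℝ} {n : ℕ}

lemma exists_add_eq_and_mul_mem_Icc (hδ : δ ∈ Set.Icc (0 : ℝ) 1) (hn : n ≠ 0) :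
    ∃ m r : ℕ, m ≠ 0 ∧ m + r = n ∧ n * δ ∈ Set.Icc (r : ℝ) (r + 1) := by
  have n_mul_nonneg : 0 ≤ n * δ := mul_nonneg n.cast_nonneg hδ.1
  rcases hδ.2.eq_or_lt with rfl | hδ1
  · obtain ⟨r, rfl⟩ := Nat.exists_eq_succ_of_ne_zero hn
    exact ⟨1, r, one_ne_zero, add_comm 1 r, by simp⟩
  · have floor_lt : ⌊n * δ⌋₊ < n :=
      (Nat.floor_lt n_mul_nonneg).2 (mul_lt_of_lt_one_right (by positivity) hδ1)
    exact ⟨n - ⌊n * δ⌋₊, ⌊n * δ⌋₊, by omega, by omega, Nat.floor_le n_mul_nonneg,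
      (Nat.lt_floor_add_one _).le⟩

lemma productCount_add_mem_Icc (ha : a ∈ Set.Ioc (0 : ℝ) 1) {m r : ℕ} (hm : m ≠ 0)
    (hr : (m + r : ℕ) * δ ∈ Set.Icc (r : ℝ) (r + 1)) :
    ((productCount a m + r : ℕ) : ℝ) ∈ Set.Icc ((m + r : ℕ) * (a + δ * (1 - a)) - 2)
      ((m + r : ℕ) * (a + δ * (1 - a))) := by
  have lower := le_productCount_add_one ha hm
  have upper := productCount_le ha m
  have hr_lower := mul_le_mul_of_nonneg_right hr.1 (sub_nonneg.2 ha.2)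
  have hr_upper := mul_le_mul_of_nonneg_right hr.2 (sub_nonneg.2 ha.2)
  push_cast at hr_lower hr_upper ⊢
  constructor <;> linarith [ha.1]

theorem logb_coeff_F_mem_Icc (ha : a ∈ Set.Ioc (0 : ℝ) 1) (hδ : δ ∈ Set.Icc (0 : ℝ) 1)
    (hn : n ≠ 0) :
    Real.logb 2 ((F a n).coeff ⌊((2 : ℝ) ^ n) ^ δ⌋₊) ∈
      Set.Icc ((2 : ℝ) ^ (n * (a + δ * (1 - a)) - 2)) (16 * n * 2 ^ (n * (a + δ * (1 - a)))) := by
  obtain ⟨m, r, hm, rfl, hr⟩ := exists_add_eq_and_mul_mem_Icc hδ hn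
  obtain ⟨exponent_ge, exponent_le⟩ := productCount_add_mem_Icc ha hm hr
  rw [two_pow_rpow]
  have le_k := two_pow_le_floor_two_rpow hr.1
  have k_le := floor_two_rpow_le_two_pow (r := r + 1) (by exact_mod_cast hr.2)
  constructor
  · calc (2 : ℝ) ^ ((m + r : ℕ) * (a + δ * (1 - a)) - 2)
        ≤ 2 ^ ((productCount a m + r : ℕ) : ℝ) :=
          Real.rpow_le_rpow_of_exponent_le one_le_two exponent_ge
      _ = 2 ^ (productCount a m + r) := Real.rpow_natCast _ _
      _ ≤ Real.logb 2 ((F a (m + r)).coeff _) :=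
          two_pow_le_logb_coeff_F_add (zero_notMem_Aset ha) hm le_k k_le
  · have factor_le : 8 * ((m : ℝ) + 1) ≤ 16 * (m + r : ℕ) := by
      have : 8 * (m + 1) ≤ 16 * (m + r) := by omega
      exact_mod_cast this
    calc Real.logb 2 ((F a (m + r)).coeff _)
        ≤ 8 * (m + 1) * 2 ^ (productCount a m + r) := logb_coeff_F_add_le a m k_le
      _ = 8 * (m + 1) * 2 ^ ((productCount a m + r : ℕ) : ℝ) := by rw [Real.rpow_natCast]
      _ ≤ 16 * (m + r : ℕ) * 2 ^ ((m + r : ℕ) * (a + δ * (1 - a))) := by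
        gcongr
        exact one_le_two

theorem face_number_asymptotics_irrational_general (ha : a ∈ Set.Ioc (0 : ℝ) 1)
    (hδ : δ ∈ Set.Icc (0 : ℝ) 1) (hn : n ≠ 0) :
    ((2 : ℝ) ^ n) ^ (a + δ * (1 - a) - 6 / √n) ≤
        Real.logb 2 ((F a n).coeff ⌊((2 : ℝ) ^ n) ^ δ⌋₊) ∧
      Real.logb 2 ((F a n).coeff ⌊((2 : ℝ) ^ n) ^ δ⌋₊) ≤
        ((2 : ℝ) ^ n) ^ (a + δ * (1 - a) + 6 / √n) := by
  obtain ⟨lower, upper⟩ := logb_coeff_F_mem_Icc ha hδ hn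
  have one_le_sqrt : 1 ≤ √(n : ℝ) :=
    Real.one_le_sqrt.2 (by exact_mod_cast Nat.one_le_iff_ne_zero.2 hn)
  have error_exponent : n * (6 / √n) = 6 * √n := by
    rw [mul_div_left_comm, Real.div_sqrt]
  have factor_le : 16 * (n : ℝ) ≤ 2 ^ (6 * √n) := calc
    16 * (n : ℝ) ≤ 2 ^ (4 : ℝ) * 2 ^ (2 * √n) := by
      gcongr
      · norm_num
      · exact natCast_le_two_rpow_two_mul_sqrt hn
    _ = 2 ^ (4 + 2 * √n) := (Real.rpow_add two_pos _ _).symm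
    _ ≤ 2 ^ (6 * √n) := Real.rpow_le_rpow_of_exponent_le one_le_two (by linarith)
  rw [two_pow_rpow n (_ - _), two_pow_rpow n (_ + _)]
  constructor
  · refine le_trans (Real.rpow_le_rpow_of_exponent_le one_le_two ?_) lower
    rw [mul_sub (n : ℝ), error_exponent]
    linarith
  · rw [mul_add (n : ℝ), error_exponent, Real.rpow_add two_pos, mul_comm]
    exact upper.trans (by gcongr)

end Asymptotics

/-- **Theorem 1.5, part 2.** For irrational `a ∈ (0,1)` and `δ ∈ (0,1)` there is a
constant `C > 0` (depending only on `a` and `δ`) such that for all large `n`, with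
`d = 2^n` and `k = ⌊d^δ⌋` (so `log₂ d = n`),
`d^(a+δ(1-a) - C/√(log₂ d)) ≤ log₂ a_{n,k} ≤ d^(a+δ(1-a) + C/√(log₂ d))`. -/
theorem face_number_asymptotics_irrational
    (a : ℝ) (ha : a ∈ Set.Ioo (0 : ℝ) 1) (hirr : Irrational a)
    (δ : ℝ) (hδ : δ ∈ Set.Ioo (0 : ℝ) 1) :
    ∃ C : ℝ, 0 < C ∧ ∃ N : ℕ, ∀ n : ℕ, N ≤ n →
      ((2 : ℝ) ^ n) ^ (a + δ * (1 - a) - C / Real.sqrt n) ≤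
          Real.logb 2 (((F a n).coeff ⌊((2 : ℝ) ^ n) ^ δ⌋₊ : ℝ)) ∧
      Real.logb 2 (((F a n).coeff ⌊((2 : ℝ) ^ n) ^ δ⌋₊ : ℝ)) ≤
          ((2 : ℝ) ^ n) ^ (a + δ * (1 - a) + C / Real.sqrt n) := by
  exact ⟨6, by norm_num, 1, fun n hn => face_number_asymptotics_irrational_general
    (Set.Ioo_subset_Ioc_self ha) (Set.Ioo_subset_Icc_self hδ) (Nat.one_le_iff_ne_zero.1 hn)⟩
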